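/- If M(n) denotes the number of legal codewords in the (1,3,n)-LRM scheme (equivalently, the number of realizable cyclic base-words of length n), then M(n)/3^n → 1 as n → ∞. -/

import Mathlib

/-- The symbol in `{0,...,5}` recording the relative order of three distinct charges
`(a, b, c)`: `0 = [1,2,3]` (a>b>c), `1 = [1,3,2]` (a>c>b), `2 = [2,1,3]` (b>a>c),
`3 = [3,1,2]` (c>a>b), `4 = [2,3,1]` (b>c>a), `5 = [3,2,1]` (c>b>a). -/
noncomputable def sym3 (a b c : ℝ) : Fin 6 :=
  if a > b then (if b > c then 0 else if a > c then 1 else 3)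
  else (if a > c then 2 else if b > c then 4 else 5)

/-- A base-word is realizable in the cyclic (1,3,n)-LRM scheme if some assignment of
distinct real charges produces it in every cyclic window. -/
def Realizable (n : ℕ) [NeZero n] (α : Fin n → Fin 6) : Prop :=
  ∃ x : Fin n → ℝ, Function.Injective x ∧
    ∀ i : Fin n, α i = sym3 (x i) (x (i + 1)) (x (i + 2))

/-!
Encode a window by whether it starts with an ascent, together with a ternary digit that says how the
direction changes and where the third charge lands. A word is consistent if adjacent windows agree
on the comparison they share. The directions must return to their start after one turn around the
cycle, so consistent words correspond to a starting direction and a ternary word whose direction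
changes cancel modulo 2; there are `3 ^ n + (-1) ^ n` of them.

A realizable word is consistent. Conversely, charges can be chosen greedily along any path of cells,
and the only obstruction is closing the cycle. If the digits `0, 0, 2, 0` occur consecutively, the
two middle cells of the six covered by these windows may be placed last, beyond all other charges,
and the cycle closes. Almost every ternary word contains that factor.
-/

open Filter Set Topology

/-- The word `w` does not contain `v` as a factor, that is, as a block of consecutive letters. -/
def Avoids {A : Type*} {k n : ℕ} (v : Fin k → A) (w : Fin n → A) : Prop :=
  ∀ p (h : p + k ≤ n), w ∘ Fin.castLE h ∘ Fin.natAdd p ≠ v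

theorem ncard_avoids_add_le {A : Type*} [Finite A] {k : ℕ} (v : Fin k → A) (n : ℕ) :
    {w : Fin (n + k) → A | Avoids v w}.ncard ≤
      {w : Fin n → A | Avoids v w}.ncard * (Nat.card A ^ k - 1) := by
  have hne : ({v}ᶜ : Set (Fin k → A)).ncard = Nat.card A ^ k - 1 := by
    rw [ncard_compl, ncard_singleton, Nat.card_fun, Nat.card_fin]
  rw [← hne, ← ncard_prod]
  refine ncard_le_ncard_of_injOn (Fin.appendEquiv n k).symm (fun w hw => ⟨fun p hp => ?_, ?_⟩)
    (Equiv.injective _).injOn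
  · exact hw p (by lia)
  · exact hw n le_rfl

theorem ncard_avoids_div_add_le {A : Type*} [Finite A] [Nonempty A] {k : ℕ} (v : Fin k → A)
    (n : ℕ) : ({w : Fin (n + k) → A | Avoids v w}.ncard : ℝ) / Nat.card A ^ (n + k) ≤
      (1 - 1 / Nat.card A ^ k) * ({w : Fin n → A | Avoids v w}.ncard / Nat.card A ^ n) := by
  have hA : (0 : ℝ) < Nat.card A := by exact_mod_cast Nat.card_pos
  have hle : ({w : Fin (n + k) → A | Avoids v w}.ncard : ℝ) ≤
      {w : Fin n → A | Avoids v w}.ncard * (Nat.card A ^ k - 1) := by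
    have h := ncard_avoids_add_le v n
    rify [Nat.one_le_pow k _ (Nat.card_pos (α := A))] at h
    exact h
  calc _ ≤ ({w : Fin n → A | Avoids v w}.ncard * (Nat.card A ^ k - 1) : ℝ) /
        Nat.card A ^ (n + k) := by gcongr
    _ = _ := by rw [pow_add]; field_simp

theorem le_pow_div_of_add_le_mul {a : ℕ → ℝ} {c : ℝ} {k : ℕ} (hc : 0 ≤ c) (ha : ∀ n, a n ≤ 1)
    (hak : ∀ n, a (n + k) ≤ c * a n) (n : ℕ) : a n ≤ c ^ (n / k) := by
  rcases k.eq_zero_or_pos with rfl | hk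
  · simpa using ha n
  induction n using Nat.strong_induction_on with
  | _ n ih =>
    rcases lt_or_ge n k with hn | hn
    · simpa [Nat.div_eq_of_lt hn] using ha n
    · obtain ⟨m, rfl⟩ := Nat.exists_eq_add_of_le' hn
      calc a (m + k) ≤ c * a m := hak m
        _ ≤ c * c ^ (m / k) := by gcongr; exact ih m (by lia)
        _ = c ^ ((m + k) / k) := by rw [Nat.add_div_right m hk, pow_succ']

theorem tendsto_ncard_avoids_div {A : Type*} [Finite A] {k : ℕ} (hk : k ≠ 0) (v : Fin k → A) :
    Tendsto (fun n => ({w : Fin n → A | Avoids v w}.ncard : ℝ) / Nat.card A ^ n) atTop (𝓝 0) := by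
  have : Nonempty A := ⟨v ⟨0, Nat.pos_of_ne_zero hk⟩⟩
  have hA : (1 : ℝ) ≤ Nat.card A ^ k := one_le_pow₀ (by exact_mod_cast Nat.card_pos)
  have hc : 0 ≤ 1 - 1 / (Nat.card A : ℝ) ^ k := sub_nonneg.2 (div_le_one_of_le₀ hA (by positivity))
  have hc' : 1 - 1 / (Nat.card A : ℝ) ^ k < 1 := sub_lt_self 1 (by positivity)
  have hle_one (n : ℕ) : ({w : Fin n → A | Avoids v w}.ncard : ℝ) / Nat.card A ^ n ≤ 1 := by
    refine div_le_one_of_le₀ ?_ (by positivity)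
    have h := ncard_le_card {w : Fin n → A | Avoids v w}
    rw [Nat.card_fun, Nat.card_fin] at h
    exact_mod_cast h
  exact squeeze_zero (fun n => by positivity)
    (le_pow_div_of_add_le_mul hc hle_one (ncard_avoids_div_add_le v))
    ((tendsto_pow_atTop_nhds_zero_of_lt_one hc hc').comp (Nat.tendsto_div_const_atTop hk))

theorem two_mul_ncard_sum_eq_zero {ι A : Type*} [Fintype ι] [Fintype A] (f : A → ZMod 2) :
    (2 * {w : ι → A | ∑ i, f (w i) = 0}.ncard : ℤ) =
      Fintype.card A ^ Fintype.card ι + (∑ a, (-1) ^ (f a).val) ^ Fintype.card ι := by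
  classical
  have hχ : ∀ t : ZMod 2, 1 + (-1 : ℤ) ^ t.val = if t = 0 then 2 else 0 := by decide
  have hmul (w : ι → A) : (-1 : ℤ) ^ (∑ i, f (w i)).val = ∏ i, (-1) ^ (f (w i)).val := by
    let χ : Multiplicative (ZMod 2) →* ℤ :=
      (AddChar.zmodChar 2 (show (-1 : ℤ) ^ 2 = 1 by norm_num)).toMonoidHom
    exact map_prod χ (fun i => Multiplicative.ofAdd (f (w i))) Finset.univ
  calc (2 * {w : ι → A | ∑ i, f (w i) = 0}.ncard : ℤ)
      = ∑ w : ι → A, (1 + (-1) ^ (∑ i, f (w i)).val) := by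
        simp_rw [hχ]
        rw [← Finset.sum_filter, Finset.sum_const, nsmul_eq_mul, mul_comm, ncard_eq_toFinset_card',
          toFinset_ofPred]
    _ = Fintype.card A ^ Fintype.card ι + ∑ w : ι → A, ∏ i, (-1) ^ (f (w i)).val := by
        simp [Finset.sum_add_distrib, hmul]
    _ = _ := by
        rw [← Fintype.prod_sum (fun (_ : ι) a => (-1 : ℤ) ^ (f a).val), Finset.prod_const,
          Finset.card_univ]

section CyclicPrimitive

variable {G : Type*} {n : ℕ}

theorem eq_of_add_one_eq_add [Add G] {s s' f : Fin (n + 1) → G} (h₀ : s 0 = s' 0)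
    (hs : ∀ i, s (i + 1) = s i + f i) (hs' : ∀ i, s' (i + 1) = s' i + f i) : s = s' := by
  funext i
  induction i using Fin.induction with
  | zero => exact h₀
  | succ i ih => rw [← Fin.coeSucc_eq_succ, hs, hs', ih]

theorem exists_cyclic_primitive [AddCommGroup G] (t : G) {f : Fin (n + 1) → G}
    (hf : ∑ i, f i = 0) : ∃ s : Fin (n + 1) → G, s 0 = t ∧ ∀ i, s (i + 1) = s i + f i := by
  have hlast : Fin.partialSum f (Fin.last (n + 1)) = 0 := by
    rw [← hf, Fin.partialSum, List.take_of_length_le (by simp), List.sum_ofFn]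
  refine ⟨fun i => t + Fin.partialSum f i.castSucc, by simp, fun i => ?_⟩
  rw [add_assoc, ← Fin.partialSum_succ]
  cases i using Fin.lastCases with
  | last => simp [hlast]
  | cast i => rw [Fin.coeSucc_eq_succ, Fin.succ_castSucc]

end CyclicPrimitive

/-- The direction from charge `a` to charge `b`: `0` for a descent and `1` for an ascent. It takes
values in `ZMod 2` so that changes of direction add up. Equal charges count as an ascent. -/
noncomputable def ascent (a b : ℝ) : ZMod 2 := if a > b then 0 else 1

theorem ascent_comm {a b : ℝ} (h : a ≠ b) : ascent b a = ascent a b + 1 := by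
  rcases h.lt_or_gt with h | h
  · simp only [ascent, gt_iff_lt, h, h.not_gt, if_true, if_false]; decide
  · simp only [ascent, gt_iff_lt, h, h.not_gt, if_true, if_false]; decide

/-- The direction from the first to the second charge of a window with the given symbol. -/
def firstAscent : Fin 6 → ZMod 2 := ![0, 0, 1, 0, 1, 1]

/-- The direction from the second to the third charge of a window with the given symbol. -/
def secondAscent : Fin 6 → ZMod 2 := ![0, 1, 0, 1, 0, 1]

/-- The direction from the first to the third charge of a window with the given symbol. -/
def outerAscent : Fin 6 → ZMod 2 := ![0, 0, 0, 1, 1, 1]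

theorem firstAscent_sym3 (a b c : ℝ) : firstAscent (sym3 a b c) = ascent a b := by
  unfold sym3 ascent
  split_ifs <;> rfl

theorem secondAscent_sym3 (a b c : ℝ) : secondAscent (sym3 a b c) = ascent b c := by
  unfold sym3 ascent
  split_ifs <;> first | rfl | (exfalso; linarith)

theorem outerAscent_sym3 (a b c : ℝ) : outerAscent (sym3 a b c) = ascent a c := by
  unfold sym3 ascent
  split_ifs <;> first | rfl | (exfalso; linarith)

theorem symbol_ext : ∀ {s t : Fin 6}, firstAscent s = firstAscent t →
    secondAscent s = secondAscent t → outerAscent s = outerAscent t → s = t := by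
  decide

theorem eq_sym3_iff {s : Fin 6} {a b c : ℝ} : s = sym3 a b c ↔
    firstAscent s = ascent a b ∧ secondAscent s = ascent b c ∧ outerAscent s = ascent a c := by
  rw [← firstAscent_sym3 a b c, ← secondAscent_sym3 a b c, ← outerAscent_sym3 a b c]
  exact ⟨by rintro rfl; exact ⟨rfl, rfl, rfl⟩, fun ⟨h₁, h₂, h₃⟩ => symbol_ext h₁ h₂ h₃⟩

/-- The ternary digit of a symbol: `0` if the window is monotone; otherwise `1` or `2` according to
whether the third charge lies on the same side of the first charge as the second one or not. -/
def digit : Fin 6 → Fin 3 := ![0, 1, 2, 2, 1, 0]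

/-- The change of direction between the two steps of a window with the given digit. -/
def turn : Fin 3 → ZMod 2 := ![0, 1, 1]

theorem secondAscent_eq : ∀ s, secondAscent s = firstAscent s + turn (digit s) := by decide

theorem exists_symbol : ∀ t a, ∃ s, firstAscent s = t ∧ digit s = a := by decide

theorem symbol_ext_digit : ∀ {s t}, firstAscent s = firstAscent t → digit s = digit t → s = t := by
  decide

theorem secondAscent_of_digit_eq_zero : ∀ {s}, digit s = 0 → secondAscent s = firstAscent s := by
  decide

theorem outerAscent_of_digit_eq_zero : ∀ {s}, digit s = 0 → outerAscent s = firstAscent s := by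
  decide

theorem secondAscent_of_digit_eq_two :
    ∀ {s}, digit s = 2 → secondAscent s = firstAscent s + 1 := by
  decide

theorem outerAscent_of_digit_eq_two :
    ∀ {s}, digit s = 2 → outerAscent s = firstAscent s + 1 := by
  decide

theorem eq_sym3_of_digit_eq_zero {s : Fin 6} {a b c : ℝ} (hs : digit s = 0)
    (hab : ascent a b = firstAscent s) (hbc : ascent b c = firstAscent s)
    (hac : ascent a c = firstAscent s) : s = sym3 a b c := by
  rw [eq_sym3_iff, hab, hbc, hac, secondAscent_of_digit_eq_zero hs]
  exact ⟨rfl, rfl, outerAscent_of_digit_eq_zero hs⟩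

theorem eq_sym3_of_digit_eq_two {s : Fin 6} {a b c : ℝ} (hs : digit s = 2)
    (hab : ascent a b = firstAscent s) (hbc : ascent b c = firstAscent s + 1)
    (hac : ascent a c = firstAscent s + 1) : s = sym3 a b c := by
  rw [eq_sym3_iff, hab, hbc, hac, secondAscent_of_digit_eq_two hs]
  exact ⟨rfl, rfl, outerAscent_of_digit_eq_two hs⟩

theorem exists_Ioo_sym3_eq {s : Fin 6} {b c : ℝ} (hbc : b ≠ c) (hs : secondAscent s = ascent b c) :
    ∃ p q, p < q ∧ ∀ z ∈ Ioo p q, sym3 z b c = s := by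
  rcases hbc.lt_or_gt with h | h
  · have hs' : s = 1 ∨ s = 3 ∨ s = 5 := by
      rw [ascent, if_neg h.not_gt] at hs
      revert s; decide
    rcases hs' with rfl | rfl | rfl
    · exact ⟨c, c + 1, by linarith, fun z hz => by grind [sym3]⟩
    · exact ⟨b, c, h, fun z hz => by grind [sym3]⟩
    · exact ⟨b - 1, b, by linarith, fun z hz => by grind [sym3]⟩
  · have hs' : s = 0 ∨ s = 2 ∨ s = 4 := by
      rw [ascent, if_pos h] at hs
      revert s; decide
    rcases hs' with rfl | rfl | rfl
    · exact ⟨b, b + 1, by linarith, fun z hz => by grind [sym3]⟩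
    · exact ⟨c, b, h, fun z hz => by grind [sym3]⟩
    · exact ⟨c - 1, c, by linarith, fun z hz => by grind [sym3]⟩

theorem exists_notMem_sym3_eq {s : Fin 6} {b c : ℝ} (hbc : b ≠ c)
    (hs : secondAscent s = ascent b c) {T : Set ℝ} (hT : T.Countable) :
    ∃ z ∉ T, sym3 z b c = s := by
  obtain ⟨p, q, hpq, hz⟩ := exists_Ioo_sym3_eq hbc hs
  obtain ⟨z, hzT, hzpq⟩ := (hT.dense_compl ℝ).exists_between hpq
  exact ⟨z, hzT, hz z hzpq⟩

theorem exists_injective_ascent_eq (s : ZMod 2) :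
    ∃ x : ℕ → ℝ, Function.Injective x ∧ s = ascent (x 0) (x 1) := by
  rcases (by decide : ∀ s : ZMod 2, s = 0 ∨ s = 1) s with rfl | rfl
  · exact ⟨fun i => -i, fun i j hij => by simpa using hij, by simp [ascent]⟩
  · exact ⟨fun i => i, fun i j hij => by simpa using hij, by simp [ascent]⟩

theorem exists_sequence_sym3_eq (N : ℕ) (β : ℕ → Fin 6)
    (hβ : ∀ i < N, secondAscent (β i) = firstAscent (β (i + 1))) :
    ∃ x : ℕ → ℝ, Function.Injective x ∧ firstAscent (β 0) = ascent (x 0) (x 1) ∧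
      ∀ i < N, β i = sym3 (x i) (x (i + 1)) (x (i + 2)) := by
  induction N generalizing β with
  | zero =>
    obtain ⟨x, hx, h₀⟩ := exists_injective_ascent_eq (firstAscent (β 0))
    exact ⟨x, hx, h₀, by simp⟩
  | succ N ih =>
    obtain ⟨x, hx, h₁, hwin⟩ := ih (fun i => β (i + 1)) fun i hi => hβ (i + 1) (by lia)
    obtain ⟨z, hz, hz₀⟩ := exists_notMem_sym3_eq (hx.ne zero_ne_one)
      ((hβ 0 N.succ_pos).trans h₁) (countable_range x)
    refine ⟨fun | 0 => z | i + 1 => x i, ?_, ?_, ?_⟩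
    · rintro (_ | i) (_ | j) hij
      · rfl
      · exact absurd ⟨j, hij.symm⟩ hz
      · exact absurd ⟨i, hij⟩ hz
      · exact congrArg _ (hx hij)
    · exact hz₀ ▸ firstAscent_sym3 z (x 0) (x 1)
    · rintro (_ | i) hi
      · exact hz₀.symm
      · exact hwin i (by lia)

/-- The charge `u` lies beyond all charges in `T` in direction `s`: strictly below them for `s = 0`
and strictly above them for `s = 1`. -/
def LiesBeyond (s : ZMod 2) (T : Set ℝ) (u : ℝ) : Prop :=
  ∀ t ∈ T, t ≠ u ∧ ascent t u = s

theorem LiesBeyond.ascent_eq_add_one {s : ZMod 2} {T : Set ℝ} {t u : ℝ} (hu : LiesBeyond s T u)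
    (ht : t ∈ T) : ascent u t = s + 1 := by
  rw [ascent_comm (hu t ht).1, (hu t ht).2]

theorem exists_liesBeyond (s : ZMod 2) {T : Set ℝ} (hT : T.Finite) : ∃ u, LiesBeyond s T u := by
  rcases (by decide : ∀ s : ZMod 2, s = 0 ∨ s = 1) s with rfl | rfl
  · obtain ⟨B, hB⟩ := hT.bddBelow
    have hgt : ∀ t ∈ T, t > B - 1 := fun t ht => by linarith [hB ht]
    exact ⟨B - 1, fun t ht => ⟨(hgt t ht).ne', if_pos (hgt t ht)⟩⟩
  · obtain ⟨B, hB⟩ := hT.bddAbove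
    have hlt : ∀ t ∈ T, t < B + 1 := fun t ht => by linarith [hB ht]
    exact ⟨B + 1, fun t ht => ⟨(hlt t ht).ne, if_neg (hlt t ht).not_gt⟩⟩

theorem exists_pair_liesBeyond (s : ZMod 2) {T : Set ℝ} (hT : T.Finite) :
    ∃ u v, LiesBeyond s T u ∧ LiesBeyond s T v ∧ u ≠ v ∧ ascent u v = s := by
  obtain ⟨u, hu⟩ := exists_liesBeyond s hT
  obtain ⟨v, hv⟩ := exists_liesBeyond s (hT.insert u)
  exact ⟨u, v, hu, fun t ht => hv t (mem_insert_of_mem u ht), hv u (mem_insert u T)⟩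

theorem exists_sequence_closing_up {m : ℕ} {β : ℕ → Fin 6} (hcyc : β (m + 4) = β 0)
    (hβ : ∀ i, secondAscent (β i) = firstAscent (β (i + 1)))
    (h₁ : digit (β (m + 2)) = 0) (h₂ : digit (β (m + 3)) = 0) (h₃ : digit (β 0) = 2)
    (h₄ : digit (β 1) = 0) : ∃ y : ℕ → ℝ, InjOn y (Iio (m + 4)) ∧
      (∀ i < m + 2, β i = sym3 (y i) (y (i + 1)) (y (i + 2))) ∧
      β (m + 2) = sym3 (y (m + 2)) (y (m + 3)) (y 0) ∧
      β (m + 3) = sym3 (y (m + 3)) (y 0) (y 1) := by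
  obtain ⟨x, hx, hx₀, hwin⟩ := exists_sequence_sym3_eq (m + 1) (fun i => β (i + 2))
    fun i _ => hβ (i + 2)
  set s := firstAscent (β (m + 2)) with hs
  have hxT {i : ℕ} (hi : i < m + 2) : x i ∈ x '' Iio (m + 2) := mem_image_of_mem x hi
  obtain ⟨u, v, hu, hv, huv_ne, huv⟩ := exists_pair_liesBeyond s ((finite_Iio (m + 2)).image x)
  have hβ_last : firstAscent (β (m + 3)) = s := by
    rw [← hβ, secondAscent_of_digit_eq_zero h₁]
  have hβ_zero : firstAscent (β 0) = s := by
    rw [← hcyc, ← hβ, secondAscent_of_digit_eq_zero h₂, hβ_last]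
  have hβ_one : firstAscent (β 1) = s + 1 := by
    rw [← hβ, secondAscent_of_digit_eq_two h₃, hβ_zero]
  have hx_zero : ascent (x 0) (x 1) = s + 1 := by
    rw [← hx₀, ← hβ, secondAscent_of_digit_eq_zero h₄, hβ_one]
  have hx_last : ascent (x m) (x (m + 1)) = s := by
    rw [hs, hwin m m.lt_succ_self, firstAscent_sym3]
  have hux : ascent u (x 0) = s + 1 := hu.ascent_eq_add_one (hxT (by lia))
  have hvx {i : ℕ} (hi : i < m + 2) : ascent v (x i) = s + 1 := hv.ascent_eq_add_one (hxT hi)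
  have hxu {i : ℕ} (hi : i < m + 2) : ascent (x i) u = s := (hu _ (hxT hi)).2
  have hxv : ascent (x (m + 1)) v = s := (hv _ (hxT (by lia))).2
  refine ⟨fun | 0 => u | 1 => v | i + 2 => x i, ?_, ?_, ?_, ?_⟩
  · have hxu_ne {i : ℕ} (hi : i < m + 2) : x i ≠ u := (hu _ (hxT hi)).1
    have hxv_ne {i : ℕ} (hi : i < m + 2) : x i ≠ v := (hv _ (hxT hi)).1
    rintro (_ | _ | i) hi (_ | _ | j) hj hij <;> grind
  · rintro (_ | _ | i) hi
    · rw [← hβ_zero] at huv hux hvx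
      exact eq_sym3_of_digit_eq_two h₃ huv (hvx (by lia)) hux
    · rw [← hβ_one] at hvx hx_zero
      exact eq_sym3_of_digit_eq_zero h₄ (hvx (by lia)) hx_zero (hvx (by lia))
    · exact hwin i (by lia)
  · exact eq_sym3_of_digit_eq_zero h₁ hx_last (hxu (by lia)) (hxu (by lia))
  · rw [← hβ_last] at hxu huv hxv
    exact eq_sym3_of_digit_eq_zero h₂ (hxu (by lia)) huv hxv

/-- Adjacent windows, which share two charges, agree on the order of those two. -/
def Consistent {n : ℕ} [NeZero n] (α : Fin n → Fin 6) : Prop :=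
  ∀ i, secondAscent (α i) = firstAscent (α (i + 1))

section Realizable

variable {n : ℕ} [NeZero n] {α : Fin n → Fin 6}

open Fin.CommRing in
theorem Realizable.consistent (h : Realizable n α) : Consistent α := by
  obtain ⟨x, -, hx⟩ := h
  intro i
  rw [hx, hx, secondAscent_sym3, firstAscent_sym3, add_assoc, one_add_one_eq_two]

open Fin.CommRing in
theorem Realizable.of_rotate (c : Fin n) (h : Realizable n fun i => α (i + c)) :
    Realizable n α := by
  obtain ⟨x, hx, hwin⟩ := h
  refine ⟨fun i => x (i - c), hx.comp sub_left_injective, fun i => ?_⟩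
  simpa [sub_add_eq_add_sub] using hwin (i - c)

open Fin.CommRing in
theorem realizable_of_injOn {y : ℕ → ℝ} (hy : InjOn y (Iio n))
    (hwin : ∀ i < n, α (i : Fin n) = sym3 (y i) (y ((i + 1) % n)) (y ((i + 2) % n))) :
    Realizable n α :=
  ⟨fun i => y i, fun i j hij => Fin.ext (hy i.isLt j.isLt hij), fun i => by
    simpa [Fin.val_add] using hwin i i.isLt⟩

end Realizable

open Fin.CommRing in
theorem Consistent.realizable_of_digits {m : ℕ} {α : Fin (m + 4) → Fin 6} (h : Consistent α)
    (c : Fin (m + 4)) (h₀ : digit (α c) = 0) (h₁ : digit (α (c + 1)) = 0)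
    (h₂ : digit (α (c + 2)) = 2) (h₃ : digit (α (c + 3)) = 0) : Realizable (m + 4) α := by
  have cast_add_four : (m : Fin (m + 4)) + 4 = 0 := by exact_mod_cast Fin.natCast_self (m + 4)
  have shift (k : ℕ) : ((m + k : ℕ) : Fin (m + 4)) + (c + 2) = c + k - 2 := by
    push_cast
    linear_combination cast_add_four
  obtain ⟨y, hinj, hwin, hwin_penult, hwin_last⟩ := exists_sequence_closing_up
    (m := m) (β := fun i => α (i + (c + 2)))
    (by rw [shift]; congr 1; push_cast; ring)
    (fun i => by rw [h, add_right_comm, Nat.cast_succ])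
    (by rw [shift, Nat.cast_ofNat, add_sub_cancel_right, h₀])
    (by rw [shift, show c + (3 : ℕ) - 2 = c + 1 by push_cast; ring, h₁])
    (by rw [Nat.cast_zero, zero_add, h₂])
    (by rw [show ((1 : ℕ) : Fin (m + 4)) + (c + 2) = c + 3 by push_cast; ring, h₃])
  refine .of_rotate (c + 2) (realizable_of_injOn hinj fun i hi => ?_)
  obtain hi | rfl | rfl : i < m + 2 ∨ i = m + 2 ∨ i = m + 3 := by lia
  · rw [Nat.mod_eq_of_lt (by lia), Nat.mod_eq_of_lt (by lia), hwin i hi]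
  · rw [Nat.mod_eq_of_lt (by lia), Nat.mod_self, hwin_penult]
  · rw [Nat.mod_self, show m + 3 + 2 = 1 + (m + 4) by lia, Nat.add_mod_right,
      Nat.mod_eq_of_lt (by lia), hwin_last]

/-- The digits of four consecutive windows that cover six cells. They make the two middle cells
continue the direction of the first two, and the last two cells reverse it, so the middle cells may
be placed after all the other charges and beyond them. -/
def barrier : Fin 4 → Fin 3 := ![0, 0, 2, 0]

open Fin.CommRing in
theorem Consistent.realizable_of_not_avoids {n : ℕ} {α : Fin (n + 1) → Fin 6} (h : Consistent α)
    (hα : ¬ Avoids barrier (digit ∘ α)) : Realizable (n + 1) α := by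
  simp only [Avoids, not_forall, not_not] at hα
  obtain ⟨p, hp, hv⟩ := hα
  obtain ⟨m, rfl⟩ : ∃ m, n = m + 3 := ⟨n - 3, by lia⟩
  have hdigit (i : Fin 4) : digit (α (p + i.val)) = barrier i := by
    rw [← hv]
    have : Fin.castLE hp (Fin.natAdd p i) = ((p + i.val : ℕ) : Fin (m + 3 + 1)) :=
      Fin.ext (Nat.mod_eq_of_lt (by lia)).symm
    simp [this]
  exact h.realizable_of_digits p (by simpa [barrier] using hdigit 0)
    (by simpa [barrier] using hdigit 1) (by simpa [barrier] using hdigit 2)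
    (by simpa [barrier] using hdigit 3)

theorem Consistent.sum_turn_digit {n : ℕ} [NeZero n] {α : Fin n → Fin 6} (h : Consistent α) :
    ∑ i, turn (digit (α i)) = 0 := by
  have hturn (i : Fin n) : turn (digit (α i)) = firstAscent (α (i + 1)) - firstAscent (α i) := by
    rw [← h i, secondAscent_eq, add_sub_cancel_left]
  simp_rw [hturn, Finset.sum_sub_distrib, sub_eq_zero]
  exact Equiv.sum_comp (Equiv.addRight 1) fun i => firstAscent (α i)

theorem injOn_firstAscent_digit (n : ℕ) :
    InjOn (fun α : Fin (n + 1) → Fin 6 => (firstAscent (α 0), digit ∘ α)) {α | Consistent α} := by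
  intro α hα β hβ h
  obtain ⟨h₀, hdigit⟩ := Prod.mk.inj h
  have hfirst : firstAscent ∘ α = firstAscent ∘ β :=
    eq_of_add_one_eq_add (f := turn ∘ digit ∘ α) h₀
      (fun i => by simp [← hα i, secondAscent_eq])
      (fun i => by simp [← hβ i, secondAscent_eq, hdigit])
  exact funext fun i => symbol_ext_digit (congrFun hfirst i) (congrFun hdigit i)

theorem bijOn_firstAscent_digit (n : ℕ) :
    BijOn (fun α : Fin (n + 1) → Fin 6 => (firstAscent (α 0), digit ∘ α)) {α | Consistent α}
      (univ ×ˢ {w | ∑ i, turn (w i) = 0}) := by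
  refine ⟨fun α hα => ⟨mem_univ _, hα.sum_turn_digit⟩, injOn_firstAscent_digit n, ?_⟩
  rintro ⟨t, w⟩ ⟨-, hw⟩
  obtain ⟨s, rfl, hs⟩ := exists_cyclic_primitive t hw
  choose α hα hdigit using fun i => exists_symbol (s i) (w i)
  refine ⟨α, fun i => ?_, ?_⟩
  · rw [secondAscent_eq, hα, hα, hdigit, hs]
  · exact Prod.ext (hα 0) (funext hdigit)

theorem ncard_consistent (n : ℕ) :
    ({α : Fin (n + 1) → Fin 6 | Consistent α}.ncard : ℤ) = 3 ^ (n + 1) + (-1) ^ (n + 1) := by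
  have hsum : ∑ a, (-1 : ℤ) ^ (turn a).val = -1 := by decide
  rw [(bijOn_firstAscent_digit n).ncard_eq, ncard_prod, ncard_univ, Nat.card_zmod]
  push_cast
  rw [two_mul_ncard_sum_eq_zero, hsum, Fintype.card_fin, Fintype.card_fin, Nat.cast_ofNat]

theorem ncard_consistent_diff_realizable_le (n : ℕ) :
    ({α : Fin (n + 1) → Fin 6 | Consistent α} \ {α | Realizable (n + 1) α}).ncard ≤
      2 * {w : Fin (n + 1) → Fin 3 | Avoids barrier w}.ncard := by
  have hprod : 2 * {w : Fin (n + 1) → Fin 3 | Avoids barrier w}.ncard =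
      ((univ : Set (ZMod 2)) ×ˢ {w : Fin (n + 1) → Fin 3 | Avoids barrier w}).ncard := by
    rw [ncard_prod, ncard_univ, Nat.card_zmod]
  rw [hprod]
  refine ncard_le_ncard_of_injOn _ (fun α hα => ⟨mem_univ _, ?_⟩)
    ((injOn_firstAscent_digit n).mono sdiff_subset)
  exact not_not.1 fun h => hα.2 (hα.1.realizable_of_not_avoids h)

theorem tendsto_ncard_consistent_div :
    Tendsto (fun n : ℕ => ({α : Fin (n + 1) → Fin 6 | Consistent α}.ncard : ℝ) / 3 ^ (n + 1))
      atTop (𝓝 1) := by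
  have hratio (n : ℕ) : ({α : Fin (n + 1) → Fin 6 | Consistent α}.ncard : ℝ) / 3 ^ (n + 1) =
      1 + (-1 / 3) ^ (n + 1) := by
    have h : ({α : Fin (n + 1) → Fin 6 | Consistent α}.ncard : ℝ) = 3 ^ (n + 1) + (-1) ^ (n + 1) :=
      mod_cast ncard_consistent n
    rw [h, add_div, div_self (by positivity), div_pow]
  have hgeom : Tendsto (fun n : ℕ => (-1 / 3 : ℝ) ^ (n + 1)) atTop (𝓝 0) :=
    (tendsto_pow_atTop_nhds_zero_of_abs_lt_one (by norm_num [abs_div])).comp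
      (tendsto_add_atTop_nat 1)
  simpa only [hratio, add_zero] using hgeom.const_add 1

theorem tendsto_ncard_consistent_diff_realizable_div :
    Tendsto (fun n : ℕ => (({α : Fin (n + 1) → Fin 6 | Consistent α} \
      {α | Realizable (n + 1) α}).ncard : ℝ) / 3 ^ (n + 1)) atTop (𝓝 0) := by
  have havoid := ((tendsto_ncard_avoids_div (by decide) barrier).comp
    (tendsto_add_atTop_nat 1)).const_mul 2
  rw [mul_zero] at havoid
  refine squeeze_zero (fun n => by positivity) (fun n => ?_) havoid
  rw [Function.comp_apply, Nat.card_fin, Nat.cast_ofNat, ← mul_div_assoc]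
  gcongr
  exact_mod_cast ncard_consistent_diff_realizable_le n

theorem stmt_13 :
    Filter.Tendsto
      (fun n : ℕ => (Nat.card {α : Fin (n + 1) → Fin 6 // Realizable (n + 1) α} : ℝ) /
        3 ^ (n + 1))
      Filter.atTop (nhds 1) := by
  have hsub (n : ℕ) : {α | Realizable (n + 1) α} ⊆ {α : Fin (n + 1) → Fin 6 | Consistent α} :=
    fun _ hα => hα.consistent
  have hcard (n : ℕ) : (Nat.card {α // Realizable (n + 1) α} : ℝ) =
      {α : Fin (n + 1) → Fin 6 | Consistent α}.ncard -
        ({α : Fin (n + 1) → Fin 6 | Consistent α} \ {α | Realizable (n + 1) α}).ncard := by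
    rw [eq_sub_iff_add_eq']
    exact_mod_cast ncard_sdiff_add_ncard_of_subset (hsub n)
  simpa only [hcard, sub_div, sub_zero] using
    tendsto_ncard_consistent_div.sub tendsto_ncard_consistent_diff_realizable_div
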